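/- arXiv:2411.13892 — 2 statements merged into one kernel-verified Lean document; each statement's English description precedes it below -/
import Mathlib

section
/- Let L be a real symmetric positive semidefinite n×n matrix with an orthonormal eigenbasis u₁, …, u_n of ℝⁿ and eigenvalues λ₁ = 0 ≤ λ₂ ≤ … ≤ λ_n, where the 0-eigenvector is u₁ = (√d₁, …, √d_n)/√(Σᵢ dᵢ) for positive reals d₁, …, d_n. Let μ > 0, let X⁰ be a real n×d matrix, set cₖ := X⁰ᵀ uₖ ∈ ℝᵈ, and assume the vectors c₁, …, c_n are pairwise orthogonal in ℝᵈ. Then the minimizer X* = μ(L + μI)⁻¹ X⁰ satisfies, for every row index v, ‖row_v(X*)‖² ≥ d_v · C, where C := ‖c₁‖² / (Σᵢ dᵢ); in particular the squared norm of each node's embedding in the minimizer is lower bounded by a constant multiple of its degree d_v. -/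
open Matrix

/-!
Write `w = u₀`, `c = X⁰ᵀ w` and `R = μ (L + μI)⁻¹`. Orthogonality of `c` to the other `cₖ` says
exactly that `w` is an eigenvector of the Gram matrix `X⁰ X⁰ᵀ`, with eigenvalue `‖c‖²`. Since
`L w = 0` gives `R w = w`, the minimizer `X* = R X⁰` satisfies `X* c = R (X⁰ X⁰ᵀ w) = ‖c‖² w`.
Hence `⟨row_v(X*), c⟩ = ‖c‖² w_v`, and Cauchy–Schwarz yields `‖row_v(X*)‖² ≥ w_v² ‖c‖²`, where
`w_v² = d_v / ∑ᵢ dᵢ`.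
-/

section CommRing

variable {ι κ R : Type*} [Fintype ι] [CommRing R]

theorem dotProduct_mul_transpose_mulVec [Fintype κ] (X : Matrix ι κ R) (x y : ι → R) :
    x ⬝ᵥ (X * Xᵀ) *ᵥ y = Xᵀ *ᵥ x ⬝ᵥ Xᵀ *ᵥ y := by
  rw [← mulVec_mulVec, dotProduct_mulVec, mulVec_transpose X x]

variable [DecidableEq ι]

theorem eq_of_forall_dotProduct_eq_of_orthonormal {u : ι → ι → R}
    (hu : ∀ i j, u i ⬝ᵥ u j = if i = j then 1 else 0) {x y : ι → R}
    (hxy : ∀ k, u k ⬝ᵥ x = u k ⬝ᵥ y) : x = y := by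
  have hUUt : of u * (of u)ᵀ = 1 := by
    ext i j
    rw [one_apply, ← hu i j]
    rfl
  have hU : IsUnit (of u) := .of_mul_eq_one _ hUUt
  exact mulVec_injective_of_isUnit hU (funext hxy)

theorem mulVec_eq_smul_of_orthonormal {u : ι → ι → R}
    (hu : ∀ i j, u i ⬝ᵥ u j = if i = j then 1 else 0) {A : Matrix ι ι R} {i : ι}
    (hA : ∀ k ≠ i, u k ⬝ᵥ A *ᵥ u i = 0) : A *ᵥ u i = (u i ⬝ᵥ A *ᵥ u i) • u i := by
  refine eq_of_forall_dotProduct_eq_of_orthonormal hu fun k => ?_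
  rw [dotProduct_smul, hu k i]
  obtain rfl | hki := eq_or_ne k i
  · simp
  · simp [hA k hki, hki]

theorem mul_transpose_mulVec_eq_smul_of_orthonormal [Fintype κ] {u : ι → ι → R}
    (hu : ∀ i j, u i ⬝ᵥ u j = if i = j then 1 else 0) {X : Matrix ι κ R} {i : ι}
    (hX : ∀ k ≠ i, Xᵀ *ᵥ u k ⬝ᵥ Xᵀ *ᵥ u i = 0) :
    (X * Xᵀ) *ᵥ u i = (Xᵀ *ᵥ u i ⬝ᵥ Xᵀ *ᵥ u i) • u i := by
  simp only [← dotProduct_mul_transpose_mulVec] at hX ⊢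
  exact mulVec_eq_smul_of_orthonormal hu hX

theorem smul_inv_mulVec_of_mulVec_eq_smul {A : Matrix ι ι R} (hA : IsUnit A) {a : R} {w : ι → R}
    (hw : A *ᵥ w = a • w) : (a • A⁻¹) *ᵥ w = w := by
  rw [smul_mulVec, ← mulVec_smul, ← hw, mulVec_mulVec,
    nonsing_inv_mul A ((isUnit_iff_isUnit_det A).mp hA), one_mulVec]

end CommRing

theorem sq_mul_dotProduct_self_le_of_mulVec_eq {ι κ K : Type*} [Fintype κ] [Field K]
    [LinearOrder K] [IsStrictOrderedRing K] {Y : Matrix ι κ K} {c : κ → K} {w : ι → K}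
    (h : Y *ᵥ c = (c ⬝ᵥ c) • w) (v : ι) : w v ^ 2 * (c ⬝ᵥ c) ≤ ∑ l, Y v l ^ 2 := by
  have hc : c ⬝ᵥ c = ∑ l, c l ^ 2 := by simp only [dotProduct, sq]
  have hc_nonneg : 0 ≤ c ⬝ᵥ c := hc ▸ Finset.sum_nonneg fun l _ => sq_nonneg (c l)
  have cauchy_schwarz : ((c ⬝ᵥ c) * w v) ^ 2 ≤ (∑ l, Y v l ^ 2) * (c ⬝ᵥ c) := by
    have hv : ∑ l, Y v l * c l = (c ⬝ᵥ c) * w v := congrFun h v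
    rw [← hv, hc]
    exact Finset.sum_mul_sq_le_sq_mul_sq _ _ _
  obtain hc_zero | hc_pos := hc_nonneg.eq_or_lt
  · rw [← hc_zero, mul_zero]
    exact Finset.sum_nonneg fun l _ => sq_nonneg (Y v l)
  · refine le_of_mul_le_mul_right ?_ hc_pos
    linarith

section Real

variable {ι κ : Type*} [Fintype ι]

theorem sq_sqrt_div_sqrt_sum {deg : ι → ℝ} (hdeg : ∀ i, 0 ≤ deg i) (v : ι) :
    (√(deg v) / √(∑ i, deg i)) ^ 2 = deg v / ∑ i, deg i := by
  rw [div_pow, Real.sq_sqrt (hdeg v), Real.sq_sqrt (Finset.sum_nonneg fun i _ => hdeg i)]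

variable [DecidableEq ι]

theorem smul_inv_add_smul_one_mulVec {L : Matrix ι ι ℝ} (hL : L.PosSemidef) {μ : ℝ} (hμ : 0 < μ)
    {w : ι → ℝ} (hw : L *ᵥ w = 0) : (μ • (L + μ • 1)⁻¹) *ᵥ w = w := by
  have hunit : IsUnit (L + μ • 1) := (PosDef.posSemidef_add hL (PosDef.one.smul hμ)).isUnit
  refine smul_inv_mulVec_of_mulVec_eq_smul hunit ?_
  rw [add_mulVec, hw, zero_add, smul_mulVec, one_mulVec]

variable [Fintype κ]

theorem sq_mul_le_sum_sq_smul_inv_mul {L : Matrix ι ι ℝ} (hL : L.PosSemidef) {μ : ℝ} (hμ : 0 < μ)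
    {w : ι → ℝ} (hw : L *ᵥ w = 0) (hw_unit : w ⬝ᵥ w = 1) {X : Matrix ι κ ℝ} {γ : ℝ}
    (hX : (X * Xᵀ) *ᵥ w = γ • w) (v : ι) :
    w v ^ 2 * (Xᵀ *ᵥ w ⬝ᵥ Xᵀ *ᵥ w) ≤ ∑ l, (μ • (L + μ • 1)⁻¹ * X) v l ^ 2 := by
  have hγ : Xᵀ *ᵥ w ⬝ᵥ Xᵀ *ᵥ w = γ := by
    rw [← dotProduct_mul_transpose_mulVec, hX, dotProduct_smul, hw_unit, smul_eq_mul, mul_one]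
  refine sq_mul_dotProduct_self_le_of_mulVec_eq ?_ v
  calc (μ • (L + μ • 1)⁻¹ * X) *ᵥ (Xᵀ *ᵥ w)
      = (μ • (L + μ • 1)⁻¹) *ᵥ ((X * Xᵀ) *ᵥ w) := by
        rw [mulVec_mulVec, mulVec_mulVec, Matrix.mul_assoc]
    _ = γ • w := by rw [hX, mulVec_smul, smul_inv_add_smul_one_mulVec hL hμ hw]
    _ = (Xᵀ *ᵥ w ⬝ᵥ Xᵀ *ᵥ w) • w := by rw [hγ]

theorem stmt7_general {L : Matrix ι ι ℝ} (hL : L.PosSemidef) {μ : ℝ} (hμ : 0 < μ)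
    {deg : ι → ℝ} (hdeg : ∀ i, 0 ≤ deg i) (hsum : 0 < ∑ i, deg i) {w : ι → ℝ}
    (hw_deg : w = fun i => √(deg i) / √(∑ i, deg i)) (hw : L *ᵥ w = 0)
    {X : Matrix ι κ ℝ} {γ : ℝ} (hX : (X * Xᵀ) *ᵥ w = γ • w) (v : ι) :
    deg v * ((∑ l, (Xᵀ *ᵥ w) l ^ 2) / ∑ i, deg i) ≤
      ∑ l, (μ • (L + μ • 1)⁻¹ * X) v l ^ 2 := by
  have hw_sq (i : ι) : w i ^ 2 = deg i / ∑ j, deg j := hw_deg ▸ sq_sqrt_div_sqrt_sum hdeg i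
  have hw_unit : w ⬝ᵥ w = 1 := by
    simp only [dotProduct, ← sq, hw_sq]
    rw [← Finset.sum_div, div_self hsum.ne']
  calc deg v * ((∑ l, (Xᵀ *ᵥ w) l ^ 2) / ∑ i, deg i)
      = w v ^ 2 * (Xᵀ *ᵥ w ⬝ᵥ Xᵀ *ᵥ w) := by
        simp only [dotProduct, ← sq, hw_sq]
        ring
    _ ≤ ∑ l, (μ • (L + μ • 1)⁻¹ * X) v l ^ 2 :=
        sq_mul_le_sum_sq_smul_inv_mul hL hμ hw hw_unit hX v

end Real

/-- Norm concentration: for a symmetric PSD matrix `L` with orthonormal eigenbasis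
`u₀, …, u_{n-1}` and sorted eigenvalues `λ₀ = 0 ≤ … ≤ λ_{n-1}`, whose 0-eigenvector is
`u₀ = (√d₁, …, √d_n)/√(Σᵢ dᵢ)` for positive `dᵢ`, if the vectors `cₖ = X⁰ᵀ uₖ` are
pairwise orthogonal then every row `v` of the minimizer `X* = μ (L + μI)⁻¹ X⁰`
satisfies `‖row_v(X*)‖² ≥ d_v · C` with `C = ‖c₀‖² / (Σᵢ dᵢ)`. -/
theorem stmt7 (n d : ℕ) [NeZero n] (L : Matrix (Fin n) (Fin n) ℝ) (hL : L.PosSemidef)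
    (u : Fin n → (Fin n → ℝ)) (lam : Fin n → ℝ)
    (h_ortho : ∀ i j : Fin n, u i ⬝ᵥ u j = if i = j then (1 : ℝ) else 0)
    (h_eig : ∀ k : Fin n, L.mulVec (u k) = lam k • u k)
    (h_mono : Monotone lam) (h_lam0 : lam 0 = 0)
    (deg : Fin n → ℝ) (hpos : ∀ i, 0 < deg i)
    (h_u0 : u 0 = fun i => Real.sqrt (deg i) / Real.sqrt (∑ i, deg i))
    (μ : ℝ) (hμ : 0 < μ) (X0 : Matrix (Fin n) (Fin d) ℝ)
    (h_c_ortho : ∀ k l : Fin n, k ≠ l → X0ᵀ.mulVec (u k) ⬝ᵥ X0ᵀ.mulVec (u l) = 0) :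
    ∀ v : Fin n,
      deg v * ((∑ l : Fin d, (X0ᵀ.mulVec (u 0)) l ^ 2) / ∑ i, deg i) ≤
        ∑ l : Fin d, ((μ • (L + μ • 1)⁻¹ * X0) v l) ^ 2 := by
  exact stmt7_general hL hμ (fun i => (hpos i).le)
    (Finset.sum_pos (fun i _ => hpos i) Finset.univ_nonempty) h_u0 (by simp [h_eig, h_lam0])
    (mul_transpose_mulVec_eq_smul_of_orthonormal h_ortho fun k => h_c_ortho k 0)
end

section
/- Let G be a finite simple undirected graph on vertex set V, let d_j denote the degree of vertex j, and let x : V → ℝᵈ assign an embedding to each vertex. Fix a vertex v with d_v > 0 whose neighbors all have positive degree, and define the one-layer message-passing update Δx_v := (Σ_{j ∈ N(v)} x_j / √(d_v d_j)) − x_v, where N(v) is the set of neighbors of v. Then ‖Δx_v‖² ≤ Σ_{j ∈ N(v)} ‖x_j/√d_j − x_v/√d_v‖²; that is, the squared norm of the embedding update of node v under one step of symmetrically normalized message passing is upper bounded by the (unhalved) local Dirichlet energy of v. -/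
open Matrix

/-!
Write `y_j = x_j / √d_j`. Since `v` has exactly `d_v` neighbors, `x_v = (√d_v)⁻¹ • (d_v • y_v)` can
be spread evenly over them, giving `Δx_v = (√d_v)⁻¹ • ∑ j ∈ N(v), (y_j - y_v)`. By Cauchy–Schwarz
the squared norm of a sum of `d_v` vectors is at most `d_v` times the sum of their squared norms,
and this factor cancels against `(√d_v)⁻¹ ^ 2`.
-/

section NormedSpace

variable {ι E : Type*} [SeminormedAddCommGroup E]

theorem norm_sum_sq_le_card_mul_sum_norm_sq (s : Finset ι) (f : ι → E) :
    ‖∑ i ∈ s, f i‖ ^ 2 ≤ s.card * ∑ i ∈ s, ‖f i‖ ^ 2 :=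
  calc ‖∑ i ∈ s, f i‖ ^ 2
    _ ≤ (∑ i ∈ s, ‖f i‖) ^ 2 := by gcongr; exact norm_sum_le s f
    _ ≤ s.card * ∑ i ∈ s, ‖f i‖ ^ 2 := sq_sum_le_card_mul_sum_sq

theorem norm_inv_sqrt_card_smul_sum_sq_le [NormedSpace ℝ E] (s : Finset ι) (f : ι → E) :
    ‖(√(s.card : ℝ))⁻¹ • ∑ i ∈ s, f i‖ ^ 2 ≤ ∑ i ∈ s, ‖f i‖ ^ 2 :=
  calc ‖(√(s.card : ℝ))⁻¹ • ∑ i ∈ s, f i‖ ^ 2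
    _ = (s.card : ℝ)⁻¹ * ‖∑ i ∈ s, f i‖ ^ 2 := by
      rw [norm_smul, mul_pow, Real.norm_eq_abs, sq_abs, inv_pow, Real.sq_sqrt s.card.cast_nonneg]
    _ ≤ ∑ i ∈ s, ‖f i‖ ^ 2 :=
      inv_mul_le_of_le_mul₀ s.card.cast_nonneg (by positivity)
        (norm_sum_sq_le_card_mul_sum_norm_sq s f)

end NormedSpace

section MessagePassing

variable {V E : Type*} (G : SimpleGraph V) [G.LocallyFinite]

/-- The degree-normalized embedding `x_v / √d_v` of the vertex `v`, whose differences along edges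
make up the Dirichlet energy. The value is `0` at an isolated vertex. -/
noncomputable def degreeNormalized [AddCommMonoid E] [Module ℝ E] (x : V → E) (v : V) : E :=
  (√(G.degree v : ℝ))⁻¹ • x v

/-- The update `Δx_v` of the embedding of `v` under one layer of symmetrically normalized message
passing: the new embedding minus the old one. -/
noncomputable def messagePassingUpdate [AddCommGroup E] [Module ℝ E] (x : V → E) (v : V) : E :=
  (∑ j ∈ G.neighborFinset v, (√((G.degree v : ℝ) * (G.degree j : ℝ)))⁻¹ • x j) - x v

/-- The local Dirichlet energy of `x` at `v`, in the unhalved convention: the sum over the edges at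
`v` of the squared differences of degree-normalized embeddings. -/
noncomputable def localDirichletEnergy [SeminormedAddCommGroup E] [NormedSpace ℝ E]
    (x : V → E) (v : V) : ℝ :=
  ∑ j ∈ G.neighborFinset v, ‖degreeNormalized G x j - degreeNormalized G x v‖ ^ 2

variable {G}

theorem sqrt_degree_smul_degreeNormalized [AddCommMonoid E] [Module ℝ E] (x : V → E) {v : V}
    (hv : 0 < G.degree v) : √(G.degree v : ℝ) • degreeNormalized G x v = x v :=
  smul_inv_smul₀ (by positivity) (x v)

theorem messagePassingUpdate_eq_inv_sqrt_degree_smul_sum [AddCommGroup E] [Module ℝ E]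
    (x : V → E) {v : V} (hv : 0 < G.degree v) :
    messagePassingUpdate G x v = (√(G.degree v : ℝ))⁻¹ •
      ∑ j ∈ G.neighborFinset v, (degreeNormalized G x j - degreeNormalized G x v) := by
  have neighbor_terms : ∑ j ∈ G.neighborFinset v,
        (√((G.degree v : ℝ) * (G.degree j : ℝ)))⁻¹ • x j =
      (√(G.degree v : ℝ))⁻¹ • ∑ j ∈ G.neighborFinset v, degreeNormalized G x j := by
    simp only [degreeNormalized, Finset.smul_sum, smul_smul,
      Real.sqrt_mul (G.degree v).cast_nonneg, mul_inv]
  have center_term : x v = (√(G.degree v : ℝ))⁻¹ •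
      ∑ _j ∈ G.neighborFinset v, degreeNormalized G x v := by
    rw [Finset.sum_const, G.card_neighborFinset_eq_degree, ← Nat.cast_smul_eq_nsmul ℝ, smul_smul,
      inv_mul_eq_div, Real.div_sqrt, sqrt_degree_smul_degreeNormalized x hv]
  rw [messagePassingUpdate, neighbor_terms, Finset.sum_sub_distrib, smul_sub, ← center_term]

theorem stmt8_general [SeminormedAddCommGroup E] [NormedSpace ℝ E] (x : V → E) {v : V}
    (hv : 0 < G.degree v) :
    ‖messagePassingUpdate G x v‖ ^ 2 ≤ localDirichletEnergy G x v := by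
  rw [messagePassingUpdate_eq_inv_sqrt_degree_smul_sum x hv, ← G.card_neighborFinset_eq_degree]
  exact norm_inv_sqrt_card_smul_sum_sq_le _ _

end MessagePassing

/-- One layer of symmetrically normalized message passing: the squared norm of the
update `Δx_v = (Σ_{j ∈ N(v)} x_j/√(d_v d_j)) − x_v` is upper bounded by the unhalved
local Dirichlet energy `Σ_{j ∈ N(v)} ‖x_j/√d_j − x_v/√d_v‖²`. -/
theorem stmt8 (V : Type*) [Fintype V] [DecidableEq V] (G : SimpleGraph V)
    [DecidableRel G.Adj] (d : ℕ) (x : V → EuclideanSpace ℝ (Fin d)) (v : V)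
    (hv : 0 < G.degree v) (hnb : ∀ j ∈ G.neighborFinset v, 0 < G.degree j) :
    ‖(∑ j ∈ G.neighborFinset v,
        (Real.sqrt ((G.degree v : ℝ) * (G.degree j : ℝ)))⁻¹ • x j) - x v‖ ^ 2 ≤
      ∑ j ∈ G.neighborFinset v,
        ‖(Real.sqrt (G.degree j : ℝ))⁻¹ • x j -
          (Real.sqrt (G.degree v : ℝ))⁻¹ • x v‖ ^ 2 :=
  stmt8_general x hv
end
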